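/- The quadratic tensor P^{ij} = cᵢcⱼ(δ_{i+1,j} - δ_{j+1,i}) and the cubic tensor Q^{ij} = cᵢcⱼ(cᵢ+cⱼ)(δ_{i+1,j} - δ_{j+1,i}) + cᵢc_{i+1}c_{i+2}δ_{i+2,j} - cᵢc_{i-1}c_{i-2}δ_{i-2,j} on ℝⁿ (indices mod n) are compatible Poisson tensors: Q - νP satisfies the Jacobi identity for every scalar ν. -/

import Mathlib

open scoped BigOperators

/-- Partial derivative of a function on `ℝ^n` in the `i`-th coordinate direction. -/
noncomputable def pderiv {n : ℕ} (i : Fin n) (f : (Fin n → ℝ) → ℝ) (x : Fin n → ℝ) : ℝ :=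
  fderiv ℝ f x (Pi.single i 1)

/-- The Jacobi identity for a bivector field written in coordinates. -/
def JacobiId {n : ℕ} (P : (Fin n → ℝ) → Fin n → Fin n → ℝ) : Prop :=
  ∀ x i j k, ∑ l, (P x l j * pderiv l (fun y => P y i k) x
    + P x l i * pderiv l (fun y => P y k j) x
    + P x l k * pderiv l (fun y => P y j i) x) = 0

/-- Kronecker delta on `Fin n`, valued in `ℝ`. -/
def kdelta {n : ℕ} (i j : Fin n) : ℝ := if i = j then 1 else 0

/-- The quadratic Poisson tensor of the periodic `n`-site Volterra lattice:
`P^{ij} = cᵢ cⱼ (δ_{i+1,j} - δ_{j+1,i})`, indices mod `n`. -/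
def Pvolt {n : ℕ} [NeZero n] (c : Fin n → ℝ) (i j : Fin n) : ℝ :=
  c i * c j * (kdelta (i + 1) j - kdelta (j + 1) i)

/-- The cubic Poisson tensor of the periodic `n`-site Volterra lattice. -/
def Qvolt {n : ℕ} [NeZero n] (c : Fin n → ℝ) (i j : Fin n) : ℝ :=
  c i * c j * (c i + c j) * (kdelta (i + 1) j - kdelta (j + 1) i)
    + c i * c (i + 1) * c (i + 2) * kdelta (i + 2) j
    - c i * c (i - 1) * c (i - 2) * kdelta (i - 2) j

/-!
On the open set `cᵢ ≠ 0` put `uᵢ = log |cᵢ|`, `eᵢ = ∂/∂uᵢ` and `fᵢ = eᵢ₋₁ + eᵢ`. Then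
`P = ∑ₘ eₘ ∧ eₘ₊₁` is constant and `Q = ∑ₘ cₘ fₘ ∧ fₘ₊₁` has decomposable coefficients. The
Jacobiator of `μ Q + ν P` is, up to a constant, `μ ∑ₗ cₗ Xₗ ∧ fₗ ∧ fₗ₊₁`, where `Xₗ`, the
Hamiltonian vector field of `uₗ`, equals
`(μ cₗ + ν) (fₗ₊₁ - fₗ) + μ (cₗ₊₁ fₗ₊₂ - cₗ₋₁ fₗ₋₁)`. The first summand dies in the wedge product,
and the second leaves a sum over the cycle that telescopes. Since a tensor of the form
`cᵢ cⱼ Aᵢⱼ(c)` can be treated in the coordinates `uᵢ` without dividing by `cᵢ`, the argument also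
covers the points where some `cᵢ` vanishes.
-/

section Wedge

variable {ι R : Type*} [CommRing R]

/-- The bivector `u ∧ v` in coordinates, without a factor `1 / 2`. -/
def wedge (u v : ι → R) (i j : ι) : R := u i * v j - u j * v i

/-- The trivector `u ∧ v ∧ w` in coordinates, as the cyclic sum that the Jacobi identity
produces; it is the determinant of the rows `u`, `v`, `w` in the columns `i`, `j`, `k`. -/
def wedge₃ (u v w : ι → R) (i j k : ι) : R :=
  u i * wedge v w j k + u j * wedge v w k i + u k * wedge v w i j

lemma wedge_swap (u v : ι → R) (i j : ι) : wedge u v i j = -wedge u v j i := by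
  simp only [wedge]
  ring

lemma wedge₃_rotate (u v w : ι → R) : wedge₃ u v w = wedge₃ v w u := by
  funext i j k
  simp only [wedge₃, wedge]
  ring

lemma wedge₃_smul_sub_add_left (a : R) (u v w : ι → R) :
    wedge₃ (a • (v - u) + w) u v = wedge₃ w u v := by
  funext i j k
  simp only [wedge₃, wedge, Pi.add_apply, Pi.smul_apply, Pi.sub_apply, smul_eq_mul]
  ring

lemma wedge₃_smul_sub_left (a b c : R) (u v w z : ι → R) (i j k : ι) :
    wedge₃ (a • (b • u - c • v)) w z i j k =
      a * (b * wedge₃ u w z i j k - c * wedge₃ v w z i j k) := by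
  simp only [wedge₃, Pi.smul_apply, Pi.sub_apply, smul_eq_mul]
  ring

end Wedge

section LogarithmicCoordinates

variable {n : ℕ}

lemma kdelta_comm (i j : Fin n) : kdelta i j = kdelta j i := by
  simp only [kdelta, eq_comm]

lemma sum_mul_kdelta (g : Fin n → ℝ) (i : Fin n) : ∑ l, g l * kdelta l i = g i := by
  simp [kdelta]

lemma kdelta_mul_apply (c : Fin n → ℝ) (i j : Fin n) : kdelta i j * c i = kdelta i j * c j := by
  by_cases h : i = j <;> simp [kdelta, h]

lemma pderiv_coord (l i : Fin n) (x : Fin n → ℝ) : pderiv l (fun y => y i) x = kdelta l i := by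
  rw [pderiv, (hasFDerivAt_apply i x).fderiv]
  simp [kdelta, Pi.single_apply, eq_comm]

lemma pderiv_mul {f g : (Fin n → ℝ) → ℝ} {x : Fin n → ℝ} (l : Fin n)
    (hf : DifferentiableAt ℝ f x) (hg : DifferentiableAt ℝ g x) :
    pderiv l (fun y => f y * g y) x = f x * pderiv l g x + g x * pderiv l f x := by
  simp [pderiv, fderiv_fun_mul hf hg]

lemma pderiv_const_add_sum_mul (a : ℝ) (b : Fin n → ℝ) (l : Fin n) (x : Fin n → ℝ) :
    pderiv l (fun y => a + ∑ m, y m * b m) x = b l := by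
  have hterm (m : Fin n) : HasFDerivAt (fun y : Fin n → ℝ => y m * b m)
      (b m • ContinuousLinearMap.proj (R := ℝ) (φ := fun _ : Fin n => ℝ) m) x :=
    (hasFDerivAt_apply m x).mul_const (b m)
  rw [pderiv, ((HasFDerivAt.fun_sum fun m _ => hterm m).const_add a).fderiv]
  simp [Pi.single_apply]

lemma sum_mul_pderiv_coord_mul_coord_mul {f : (Fin n → ℝ) → ℝ} {x : Fin n → ℝ}
    (hf : DifferentiableAt ℝ f x) (v : Fin n → ℝ) (i k : Fin n) :
    ∑ l, x l * v l * pderiv l (fun y => y i * y k * f y) x =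
      x i * x k * ((v i + v k) * f x + ∑ l, x l * (v l * pderiv l f x)) := by
  have hleibniz (l : Fin n) : pderiv l (fun y => y i * y k * f y) x =
      x i * x k * pderiv l f x + f x * (x i * kdelta l k + x k * kdelta l i) := by
    rw [pderiv_mul l (by fun_prop) hf, pderiv_mul l (by fun_prop) (by fun_prop),
      pderiv_coord, pderiv_coord]
  calc ∑ l, x l * v l * pderiv l (fun y => y i * y k * f y) x
      = x i * x k * ∑ l, x l * (v l * pderiv l f x)
          + f x * x i * ∑ l, x l * v l * kdelta l k
          + f x * x k * ∑ l, x l * v l * kdelta l i := by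
        simp only [hleibniz, Finset.mul_sum, ← Finset.sum_add_distrib]
        exact Finset.sum_congr rfl fun l _ => by ring
    _ = x i * x k * ((v i + v k) * f x + ∑ l, x l * (v l * pderiv l f x)) := by
        rw [sum_mul_kdelta, sum_mul_kdelta]
        ring

-- The operators `x l * ∂ₗ` are the derivations `∂ / ∂ log x l`; the terms in which they hit the
-- prefactor `x i * x j` cancel in the cyclic sum by skew-symmetry.
theorem jacobiId_coord_mul_coord_mul {A : (Fin n → ℝ) → Fin n → Fin n → ℝ}
    (hskew : ∀ x i j, A x i j = -A x j i)
    (hdiff : ∀ i j, Differentiable ℝ fun x => A x i j)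
    (hjacobi : ∀ x i j k, ∑ l, x l * (A x l j * pderiv l (fun y => A y i k) x
      + A x l i * pderiv l (fun y => A y k j) x
      + A x l k * pderiv l (fun y => A y j i) x) = 0) :
    JacobiId fun x i j => x i * x j * A x i j := by
  intro x i j k
  have hcontract (p q r : Fin n) :
      ∑ l, x l * x r * A x l r * pderiv l (fun y => y p * y q * A y p q) x =
        x r * (x p * x q * ((A x p r + A x q r) * A x p q
          + ∑ l, x l * (A x l r * pderiv l (fun y => A y p q) x))) := by
    rw [← sum_mul_pderiv_coord_mul_coord_mul (hdiff p q x) (fun l => A x l r), Finset.mul_sum]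
    exact Finset.sum_congr rfl fun l _ => by ring
  have hJ := hjacobi x i j k
  simp only [mul_add, Finset.sum_add_distrib] at hJ
  rw [Finset.sum_add_distrib, Finset.sum_add_distrib, hcontract, hcontract, hcontract,
    hskew x k i, hskew x j i, hskew x k j]
  linear_combination x i * x j * x k * hJ

theorem jacobiId_coord_mul_coord_mul_affine {K : Fin n → Fin n → ℝ} {Ω : Fin n → Fin n → Fin n → ℝ}
    (hK : ∀ i j, K i j = -K j i) (hΩ : ∀ l i j, Ω l i j = -Ω l j i)
    (hjacobi : ∀ (x : Fin n → ℝ) i j k,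
      ∑ l, x l * ((K l j + ∑ m, x m * Ω m l j) * Ω l i k
        + (K l i + ∑ m, x m * Ω m l i) * Ω l k j
        + (K l k + ∑ m, x m * Ω m l k) * Ω l j i) = 0) :
    JacobiId fun x i j => x i * x j * (K i j + ∑ m, x m * Ω m i j) := by
  refine jacobiId_coord_mul_coord_mul (A := fun x i j => K i j + ∑ m, x m * Ω m i j)
    (fun x i j => ?_) (fun i j => by fun_prop) fun x i j k => ?_
  · simp only [hK i j, hΩ _ i j, mul_neg, Finset.sum_neg_distrib, neg_add]
  · simpa only [pderiv_const_add_sum_mul] using hjacobi x i j k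

end LogarithmicCoordinates

section VolterraLattice

variable {n : ℕ} [NeZero n]

/-- The vector `fₘ = eₘ₋₁ + eₘ` in the logarithmic frame `eₘ`, whose components are `kdelta m`.
The cubic Volterra tensor is `∑ₘ cₘ fₘ ∧ fₘ₊₁`. -/
def bondVec (m : Fin n) : Fin n → ℝ := kdelta (m - 1) + kdelta m

lemma kdelta_sub_left (i j a : Fin n) : kdelta (i - a) j = kdelta i (j + a) := by
  simp only [kdelta, sub_eq_iff_eq_add]

lemma kdelta_add_left (i j a : Fin n) : kdelta (i + a) j = kdelta i (j - a) := by
  simp only [kdelta, eq_sub_iff_add_eq]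

open Fin.CommRing in
lemma add_two_eq_add_one_add_one (i : Fin n) : i + 2 = i + 1 + 1 := by
  rw [add_assoc, one_add_one_eq_two]

lemma sub_two_eq_sub_one_sub_one (i : Fin n) : i - 2 = i - 1 - 1 := by
  rw [sub_eq_iff_eq_add, add_two_eq_add_one_add_one, sub_add_cancel, sub_add_cancel]

lemma sum_mul_bondVec (g : Fin n → ℝ) (l : Fin n) :
    ∑ m, g m * bondVec m l = g (l + 1) + g l := by
  simp only [bondVec, Pi.add_apply, kdelta_sub_left, mul_add, Finset.sum_add_distrib,
    sum_mul_kdelta]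

lemma sum_mul_bondVec_succ (g : Fin n → ℝ) (l : Fin n) :
    ∑ m, g m * bondVec (m + 1) l = g l + g (l - 1) := by
  simp only [bondVec, Pi.add_apply, add_sub_cancel_right, kdelta_add_left, mul_add,
    Finset.sum_add_distrib, sum_mul_kdelta]

lemma sum_wedge_kdelta (l j : Fin n) :
    ∑ m, wedge (kdelta m) (kdelta (m + 1)) l j = bondVec (l + 1) j - bondVec l j := by
  calc ∑ m, wedge (kdelta m) (kdelta (m + 1)) l j
      = ∑ m, kdelta (m + 1) j * kdelta m l - ∑ m, kdelta m j * kdelta m (l - 1) := by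
        simp only [wedge, kdelta_add_left _ l, Finset.sum_sub_distrib, mul_comm (kdelta _ l)]
    _ = bondVec (l + 1) j - bondVec l j := by
        simp only [sum_mul_kdelta, bondVec, Pi.add_apply, add_sub_cancel_right]
        ring

lemma sum_mul_wedge_bondVec (c : Fin n → ℝ) (l j : Fin n) :
    ∑ m, c m * wedge (bondVec m) (bondVec (m + 1)) l j =
      c l * (bondVec (l + 1) j - bondVec l j)
        + (c (l + 1) * bondVec (l + 1 + 1) j - c (l - 1) * bondVec (l - 1) j) := by
  calc ∑ m, c m * wedge (bondVec m) (bondVec (m + 1)) l j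
      = ∑ m, c m * bondVec (m + 1) j * bondVec m l
          - ∑ m, c m * bondVec m j * bondVec (m + 1) l := by
        rw [← Finset.sum_sub_distrib]
        exact Finset.sum_congr rfl fun m _ => by rw [wedge]; ring
    _ = _ := by
        rw [sum_mul_bondVec, sum_mul_bondVec_succ]
        ring

lemma Pvolt_eq_sum_wedge (c : Fin n → ℝ) (i j : Fin n) :
    Pvolt c i j = c i * c j * ∑ m, wedge (kdelta m) (kdelta (m + 1)) i j := by
  rw [sum_wedge_kdelta, Pvolt, kdelta_comm (j + 1) i, ← kdelta_sub_left]
  simp only [bondVec, Pi.add_apply, add_sub_cancel_right]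
  ring

lemma Qvolt_eq_sum_wedge (c : Fin n → ℝ) (i j : Fin n) :
    Qvolt c i j = c i * c j * ∑ m, c m * wedge (bondVec m) (bondVec (m + 1)) i j := by
  rw [sum_mul_wedge_bondVec, Qvolt, kdelta_comm (j + 1) i, ← kdelta_sub_left,
    add_two_eq_add_one_add_one, sub_two_eq_sub_one_sub_one]
  simp only [bondVec, Pi.add_apply, add_sub_cancel_right]
  linear_combination c i * c (i + 1) * kdelta_mul_apply c (i + 1 + 1) j
    - c i * c (i - 1) * kdelta_mul_apply c (i - 1 - 1) j
    - c i * c j * kdelta_mul_apply c (i + 1) j + c i * c j * kdelta_mul_apply c (i - 1) j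

lemma sum_mul_wedge₃_bondVec (c : Fin n → ℝ) (i j k : Fin n) :
    ∑ l, c l * (c (l + 1) * wedge₃ (bondVec (l + 1 + 1)) (bondVec l) (bondVec (l + 1)) i j k
      - c (l - 1) * wedge₃ (bondVec (l - 1)) (bondVec l) (bondVec (l + 1)) i j k) = 0 := by
  set F : Fin n → ℝ := fun l =>
    c l * (c (l + 1) * wedge₃ (bondVec l) (bondVec (l + 1)) (bondVec (l + 1 + 1)) i j k) with hF
  have hterm (l : Fin n) :
      c l * (c (l + 1) * wedge₃ (bondVec (l + 1 + 1)) (bondVec l) (bondVec (l + 1)) i j k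
        - c (l - 1) * wedge₃ (bondVec (l - 1)) (bondVec l) (bondVec (l + 1)) i j k) =
      F l - F (l - 1) := by
    simp only [hF, sub_add_cancel, wedge₃_rotate (bondVec (l + 1 + 1))]
    ring
  simp only [hterm, Finset.sum_sub_distrib]
  exact sub_eq_zero.mpr (Equiv.sum_comp (Equiv.subRight (1 : Fin n)) F).symm

/-- Components of the Hamiltonian vector field of `log |cₗ|` for `μ Q + ν P`, in the logarithmic
frame. -/
def logHamiltonianVec (μ ν : ℝ) (c : Fin n → ℝ) (l j : Fin n) : ℝ :=
  ν * ∑ m, wedge (kdelta m) (kdelta (m + 1)) l j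
    + ∑ m, c m * (μ * wedge (bondVec m) (bondVec (m + 1)) l j)

lemma logHamiltonianVec_eq (μ ν : ℝ) (c : Fin n → ℝ) (l : Fin n) :
    logHamiltonianVec μ ν c l = (μ * c l + ν) • (bondVec (l + 1) - bondVec l)
      + μ • (c (l + 1) • bondVec (l + 1 + 1) - c (l - 1) • bondVec (l - 1)) := by
  funext j
  simp only [logHamiltonianVec, mul_left_comm _ μ, ← Finset.mul_sum, sum_wedge_kdelta,
    sum_mul_wedge_bondVec, Pi.add_apply, Pi.sub_apply, Pi.smul_apply, smul_eq_mul]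
  ring

lemma sum_mul_wedge₃_logHamiltonianVec (μ ν : ℝ) (c : Fin n → ℝ) (i j k : Fin n) :
    ∑ l, c l * wedge₃ (logHamiltonianVec μ ν c l) (bondVec l) (bondVec (l + 1)) i j k = 0 := by
  simp only [logHamiltonianVec_eq, wedge₃_smul_sub_add_left, wedge₃_smul_sub_left,
    mul_left_comm _ μ, ← Finset.mul_sum, sum_mul_wedge₃_bondVec, mul_zero]

end VolterraLattice

theorem stmt8_general (n : ℕ) [NeZero n] (μ ν : ℝ) :
    JacobiId (fun (c : Fin n → ℝ) i j => μ * Qvolt c i j + ν * Pvolt c i j) := by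
  have hpencil (c : Fin n → ℝ) (i j : Fin n) :
      μ * Qvolt c i j + ν * Pvolt c i j = c i * c j * logHamiltonianVec μ ν c i j := by
    simp only [Qvolt_eq_sum_wedge, Pvolt_eq_sum_wedge, logHamiltonianVec, mul_left_comm _ μ,
      ← Finset.mul_sum]
    ring
  simp only [hpencil, logHamiltonianVec]
  refine jacobiId_coord_mul_coord_mul_affine (fun i j => ?_) (fun l i j => ?_) fun c i j k => ?_
  · simp only [wedge_swap _ _ i j, Finset.sum_neg_distrib, mul_neg]
  · rw [wedge_swap, mul_neg]
  · calc _ = μ * ∑ l, c l *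
          wedge₃ (logHamiltonianVec μ ν c l) (bondVec l) (bondVec (l + 1)) j i k := by
          rw [Finset.mul_sum]
          exact Finset.sum_congr rfl fun l _ => by simp only [wedge₃, logHamiltonianVec]; ring
      _ = 0 := by rw [sum_mul_wedge₃_logHamiltonianVec, mul_zero]

/-- The quadratic and cubic Volterra tensors are compatible: `Q - ν P` satisfies the Jacobi
identity for every scalar `ν`. -/
theorem stmt8 (n : ℕ) [NeZero n] (hn : 5 ≤ n) (ν : ℝ) :
    JacobiId (fun (c : Fin n → ℝ) i j => Qvolt c i j - ν * Pvolt c i j) := by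
  simpa only [one_mul, neg_mul, ← sub_eq_add_neg] using stmt8_general n 1 (-ν)
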